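/- For the sequences generated by Algorithm 1, for every i ∈ I one has lim_{n→∞} ‖z_n^{(i)} − y_n^{(i)}‖ = 0 and lim_{n→∞} ‖x_n − w_n^{(i)}‖ = 0. -/

import Mathlib

open Filter Topology

/-!
For a common fixed point `p`, a stage with input `w` and output `w'` satisfies
`‖z - y‖² + ‖y - T y‖² ≤ ‖w - p‖² - ‖w' - p‖² + o(1)`, and over a cycle the right-hand sides
telescope to `‖x_n - p‖² - ‖x_{n+1} - p‖² + o(1)`. Hence everything reduces to `x_{n+1} - x_n → 0`.
By the Baillon–Haddad theorem the gradient step is nonexpansive for small `λ_n`, so each stage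
carries the increments `w_{n+1} - w_n` to increments that are smaller by the factor `1 - α_{n+1}`,
up to an error `o(α_{n+1})`; as `∑ α_n = ∞`, Xu's lemma makes them tend to zero.
-/

open Asymptotics
open scoped InnerProductSpace

section RealSequences

theorem tendsto_prod_one_sub_atTop_zero {γ : ℕ → ℝ} (h0 : ∀ n, 0 ≤ γ n) (h1 : ∀ n, γ n ≤ 1)
    (hγ : ¬ Summable γ) (N : ℕ) :
    Tendsto (fun n ↦ ∏ i ∈ Finset.Ico N n, (1 - γ i)) atTop (𝓝 0) := by
  have hsum : Tendsto (fun n ↦ ∑ i ∈ Finset.Ico N n, γ i) atTop atTop := by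
    have hrange := (not_summable_iff_tendsto_nat_atTop_of_nonneg h0).1 hγ
    refine (tendsto_atTop_add_const_right _ (-∑ i ∈ Finset.range N, γ i) hrange).congr' ?_
    filter_upwards [eventually_ge_atTop N] with n hn
    rw [Finset.sum_Ico_eq_sub _ hn, sub_eq_add_neg]
  refine squeeze_zero (fun n ↦ Finset.prod_nonneg fun i _ ↦ sub_nonneg.2 (h1 i)) (fun n ↦ ?_)
    (Real.tendsto_exp_neg_atTop_nhds_zero.comp hsum)
  calc ∏ i ∈ Finset.Ico N n, (1 - γ i)
      ≤ ∏ i ∈ Finset.Ico N n, Real.exp (-γ i) :=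
        Finset.prod_le_prod (fun i _ ↦ sub_nonneg.2 (h1 i)) fun i _ ↦ Real.one_sub_le_exp_neg _
    _ = Real.exp (-∑ i ∈ Finset.Ico N n, γ i) := by rw [← Real.exp_sum, Finset.sum_neg_distrib]

theorem tendsto_zero_of_le_one_sub_mul_add_isLittleO {a e γ : ℕ → ℝ} (ha : ∀ n, 0 ≤ a n)
    (h0 : ∀ n, 0 ≤ γ n) (h1 : ∀ n, γ n ≤ 1) (hγ : ¬ Summable γ) (he : e =o[atTop] γ)
    (hrec : ∀ᶠ n in atTop, a (n + 1) ≤ (1 - γ n) * a n + e n) :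
    Tendsto a atTop (𝓝 0) := by
  refine tendsto_order.2 ⟨fun b hb ↦ .of_forall fun n ↦ hb.trans_le (ha n), fun ε hε ↦ ?_⟩
  obtain ⟨N, hN⟩ := eventually_atTop.1 (hrec.and (he.bound (half_pos hε)))
  have hcontract : ∀ n ≥ N, a (n + 1) - ε / 2 ≤ (1 - γ n) * (a n - ε / 2) + 0 := fun n hn ↦ by
    obtain ⟨hstep, herr⟩ := hN n hn
    rw [Real.norm_of_nonneg (h0 n)] at herr
    linarith [(le_abs_self (e n)).trans herr]
  have hlim : ∀ᶠ n in atTop, (a N - ε / 2) * ∏ i ∈ Finset.Ico N n, (1 - γ i) < ε / 2 :=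
    ((tendsto_prod_one_sub_atTop_zero h0 h1 hγ N).const_mul (a N - ε / 2)).eventually
      (gt_mem_nhds (by simpa using half_pos hε))
  filter_upwards [hlim, eventually_ge_atTop N] with n hn hNn
  have hprod := discrete_gronwall_prod_general (u := fun n ↦ a n - ε / 2) hcontract
    (fun n _ ↦ sub_nonneg.2 (h1 n)) hNn
  simp only [zero_mul, Finset.sum_const_zero, add_zero] at hprod
  linarith

theorem exists_isLittleO_le_of_forall_stage {M : ℕ} (hM : 1 ≤ M) {δ : ℕ → ℕ → ℝ} {γ : ℕ → ℝ}
    (hδ : ∀ n i, 0 ≤ δ n i) (h0 : ∀ n, 0 ≤ γ n)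
    (hstage : ∀ i ∈ Finset.Icc 1 M, ∃ e : ℕ → ℝ, e =o[atTop] γ ∧
      ∀ᶠ n in atTop, δ n (i + 1) ≤ (1 - γ n) * δ n i + e n) :
    ∃ e : ℕ → ℝ, e =o[atTop] γ ∧ ∀ᶠ n in atTop, δ n (M + 1) ≤ (1 - γ n) * δ n 1 + e n := by
  induction M, hM using Nat.le_induction with
  | base => exact hstage 1 (by simp)
  | succ M hM ih =>
    obtain ⟨e, he, hle⟩ := ih fun i hi ↦ hstage i (Finset.Icc_subset_Icc_right M.le_succ hi)
    obtain ⟨e', he', hle'⟩ := hstage (M + 1) (Finset.mem_Icc.2 ⟨by lia, le_rfl⟩)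
    refine ⟨fun n ↦ e n + e' n, he.add he', ?_⟩
    filter_upwards [hle, hle'] with n hn hn'
    linarith [mul_nonneg (h0 n) (hδ n (M + 1))]

theorem tendsto_zero_of_le_sub_succ_add {M : ℕ} {a b : ℕ → ℕ → ℝ} (hb : ∀ n i, 0 ≤ b n i)
    (hcycle : Tendsto (fun n ↦ a n 1 - a n (M + 1)) atTop (𝓝 0))
    (hstage : ∀ i ∈ Finset.Icc 1 M, ∃ e : ℕ → ℝ, Tendsto e atTop (𝓝 0) ∧
      ∀ᶠ n in atTop, b n i ≤ a n i - a n (i + 1) + e n) {i : ℕ} (hi : i ∈ Finset.Icc 1 M) :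
    Tendsto (fun n ↦ b n i) atTop (𝓝 0) := by
  choose! e he hle using hstage
  have hsmall :
      Tendsto (fun n ↦ a n 1 - a n (M + 1) + ∑ j ∈ Finset.Icc 1 M, e j n) atTop (𝓝 0) := by
    simpa using hcycle.add (tendsto_finsetSum _ he)
  refine squeeze_zero' (.of_forall fun n ↦ hb n i) ?_ hsmall
  filter_upwards [(eventually_all_finset _).2 hle] with n hn
  calc b n i ≤ ∑ j ∈ Finset.Icc 1 M, b n j :=
        Finset.single_le_sum (fun j _ ↦ hb n j) hi
    _ ≤ ∑ j ∈ Finset.Icc 1 M, (a n j - a n (j + 1) + e j n) := Finset.sum_le_sum hn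
    _ = a n 1 - a n (M + 1) + ∑ j ∈ Finset.Icc 1 M, e j n := by
        rw [Finset.sum_add_distrib, ← neg_sub (a n (M + 1)), ← Finset.Ico_add_one_right_eq_Icc,
          ← Finset.sum_Ico_sub (a n) (by simp), ← Finset.sum_neg_distrib]
        simp only [neg_sub]

end RealSequences

section NormedSpace

variable {E : Type*} [SeminormedAddCommGroup E] [NormedSpace ℝ E]

theorem isLittleO_norm_smul_of_isBigO_one {ι : Type*} {l : Filter ι} {a b : ι → ℝ} {v : ι → E}
    (ha : a =o[l] b) (hv : v =O[l] fun _ ↦ (1 : ℝ)) : (fun n ↦ ‖a n • v n‖) =o[l] b := by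
  simpa using (ha.smul_isBigO hv).norm_left

theorem tendsto_smul_zero_of_isBigO_one {ι : Type*} {l : Filter ι} {a : ι → ℝ} {v : ι → E}
    (ha : Tendsto a l (𝓝 0)) (hv : v =O[l] fun _ ↦ (1 : ℝ)) :
    Tendsto (fun n ↦ a n • v n) l (𝓝 0) := by
  rw [← isLittleO_one_iff ℝ] at ha ⊢
  simpa using ha.smul_isBigO hv

theorem isBigO_one_of_succ_eq_add_smul {v d : ℕ → E} {β : ℕ → ℝ}
    (hv : v =O[atTop] fun _ ↦ (1 : ℝ)) (hβ : Tendsto β atTop (𝓝 0))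
    (hrec : ∀ᶠ n in atTop, d (n + 1) = v n + β n • d n) : d =O[atTop] fun _ ↦ (1 : ℝ) := by
  obtain ⟨C, hC⟩ := hv.bound
  have hβ' : ∀ᶠ n in atTop, ‖β n‖ < 1 / 2 := hβ.norm.eventually (gt_mem_nhds (by norm_num))
  obtain ⟨N, hN⟩ := eventually_atTop.1 (hC.and (hβ'.and hrec))
  refine .of_bound (max ‖d N‖ (2 * C)) (eventually_atTop.2 ⟨N, fun n hn ↦ ?_⟩)
  rw [norm_one, mul_one]
  induction n, hn using Nat.le_induction with
  | base => exact le_max_left _ _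
  | succ n hn ih =>
    obtain ⟨hvn, hβn, hdn⟩ := hN n hn
    rw [norm_one, mul_one] at hvn
    calc ‖d (n + 1)‖ ≤ ‖v n‖ + ‖β n‖ * ‖d n‖ := by
          rw [hdn, ← norm_smul]; exact norm_add_le _ _
      _ ≤ C + 1 / 2 * max ‖d N‖ (2 * C) := by gcongr
      _ ≤ max ‖d N‖ (2 * C) := by linarith [le_max_right ‖d N‖ (2 * C)]

end NormedSpace

section SeminormedGroup

variable {E : Type*} [SeminormedAddCommGroup E]

theorem norm_add_sub_sq_le (w s p : E) :
    ‖w + s - p‖ ^ 2 ≤ ‖w - p‖ ^ 2 + (2 * ‖w - p‖ + ‖s‖) * ‖s‖ := by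
  rw [add_sub_right_comm]
  calc ‖w - p + s‖ ^ 2 ≤ (‖w - p‖ + ‖s‖) ^ 2 := by gcongr; exact norm_add_le _ _
    _ = ‖w - p‖ ^ 2 + (2 * ‖w - p‖ + ‖s‖) * ‖s‖ := by ring

theorem isBigO_one_sub_pred {w : ℕ → E} (hw : w =O[atTop] fun _ ↦ (1 : ℝ)) :
    (fun n ↦ w n - w (n - 1)) =O[atTop] fun _ ↦ (1 : ℝ) :=
  hw.sub (hw.comp_tendsto (tendsto_sub_atTop_nat 1))

theorem tendsto_zero_of_tendsto_norm_sq_add {F ι : Type*} [SeminormedAddCommGroup F] {l : Filter ι}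
    {a : ι → E} {b : ι → F} (h : Tendsto (fun n ↦ ‖a n‖ ^ 2 + ‖b n‖ ^ 2) l (𝓝 0)) :
    Tendsto a l (𝓝 0) := by
  have hsq : Tendsto (fun n ↦ ‖a n‖ ^ 2) l (𝓝 0) :=
    squeeze_zero (fun _ ↦ sq_nonneg _) (fun _ ↦ le_add_of_nonneg_right (sq_nonneg _)) h
  rw [tendsto_zero_iff_norm_tendsto_zero]
  simpa using hsq.sqrt

theorem tendsto_norm_sq_sub_norm_sq {ι : Type*} {l : Filter ι} {a b : ι → E}
    (ha : a =O[l] fun _ ↦ (1 : ℝ)) (hb : b =O[l] fun _ ↦ (1 : ℝ))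
    (hab : Tendsto (fun n ↦ a n - b n) l (𝓝 0)) :
    Tendsto (fun n ↦ ‖a n‖ ^ 2 - ‖b n‖ ^ 2) l (𝓝 0) := by
  have hdiff : Tendsto (fun n ↦ ‖a n‖ - ‖b n‖) l (𝓝 0) :=
    squeeze_zero_norm (fun n ↦ abs_norm_sub_norm_le _ _) (tendsto_zero_iff_norm_tendsto_zero.1 hab)
  refine (tendsto_smul_zero_of_isBigO_one hdiff (ha.norm_left.add hb.norm_left)).congr fun n ↦ ?_
  rw [smul_eq_mul, sq_sub_sq, mul_comm]

end SeminormedGroup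

section Operators

variable {H : Type*} [NormedAddCommGroup H] [InnerProductSpace ℝ H]

/-- `T` is `κ`-cocoercive: `κ ‖T x - T y‖² ≤ ⟪T x - T y, x - y⟫`. The gradients of the algorithm are
cocoercive by the Baillon–Haddad theorem, and `1`-cocoercive means firmly nonexpansive. -/
def Cocoercive (κ : ℝ) (T : H → H) : Prop :=
  ∀ x y, κ * ‖T x - T y‖ ^ 2 ≤ ⟪T x - T y, x - y⟫_ℝ

namespace Cocoercive

variable {κ : ℝ} {T : H → H}

theorem mul_norm_sub_le (hT : Cocoercive κ T) (x y : H) : κ * ‖T x - T y‖ ≤ ‖x - y‖ := by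
  rcases (norm_nonneg (T x - T y)).eq_or_lt with h0 | hpos
  · simp [← h0]
  · refine le_of_mul_le_mul_right ?_ hpos
    calc κ * ‖T x - T y‖ * ‖T x - T y‖ = κ * ‖T x - T y‖ ^ 2 := by ring
      _ ≤ ‖T x - T y‖ * ‖x - y‖ := (hT x y).trans (real_inner_le_norm _ _)
      _ = ‖x - y‖ * ‖T x - T y‖ := mul_comm _ _

theorem isBigO_one_comp (hT : Cocoercive κ T) (hκ : 0 < κ) {ι : Type*} {l : Filter ι} {v : ι → H}
    (hv : v =O[l] fun _ ↦ (1 : ℝ)) : (fun n ↦ T (v n)) =O[l] fun _ ↦ (1 : ℝ) := by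
  have hsub : (fun n ↦ T (v n) - T 0) =O[l] v := .of_bound κ⁻¹ <| .of_forall fun n ↦ by
    have := hT.mul_norm_sub_le (v n) 0
    rwa [sub_zero, ← le_inv_mul_iff₀ hκ] at this
  simpa using (hsub.trans hv).add (isBigO_const_one ℝ (T 0) l)

theorem norm_sub_smul_sub_le (hT : Cocoercive κ T) {l : ℝ} (hl : 0 ≤ l) (hlκ : l ≤ 2 * κ)
    (x y : H) : ‖(x - l • T x) - (y - l • T y)‖ ≤ ‖x - y‖ := by
  have hsplit : (x - l • T x) - (y - l • T y) = (x - y) - l • (T x - T y) := by module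
  refine le_of_sq_le_sq ?_ (norm_nonneg _)
  calc ‖(x - l • T x) - (y - l • T y)‖ ^ 2
      = ‖x - y‖ ^ 2 - 2 * l * ⟪T x - T y, x - y⟫_ℝ + l ^ 2 * ‖T x - T y‖ ^ 2 := by
        rw [hsplit, norm_sub_sq_real, real_inner_smul_right, norm_smul, mul_pow,
          Real.norm_eq_abs, sq_abs, real_inner_comm]
        ring
    _ ≤ ‖x - y‖ ^ 2 - 2 * l * (κ * ‖T x - T y‖ ^ 2) + l * (2 * κ) * ‖T x - T y‖ ^ 2 := by
        rw [sq l]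
        gcongr
        exact hT x y
    _ = ‖x - y‖ ^ 2 := by ring

theorem norm_sub_sq_add_le_of_isFixedPt (hT : Cocoercive 1 T) {p : H} (hp : Function.IsFixedPt T p)
    (x : H) : ‖T x - p‖ ^ 2 + ‖x - T x‖ ^ 2 ≤ ‖x - p‖ ^ 2 := by
  have hfirm := hT x p
  rw [hp.eq, one_mul, real_inner_comm] at hfirm
  rw [← sub_sub_sub_cancel_right x (T x) p, norm_sub_sq_real (x - p)]
  linarith

end Cocoercive

theorem norm_convexComb_sub_sq_le {t : ℝ} (h0 : 0 ≤ t) (h1 : t ≤ 1) (u v p : H) :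
    ‖t • u + (1 - t) • v - p‖ ^ 2 ≤ t * ‖u - p‖ ^ 2 + ‖v - p‖ ^ 2 := by
  have hsplit : t • u + (1 - t) • v - p = t • (u - p) + (1 - t) • (v - p) := by module
  have hconv := ((convexOn_norm convex_univ).pow (fun _ _ ↦ norm_nonneg _) 2).2
    (Set.mem_univ (u - p)) (Set.mem_univ (v - p)) h0 (sub_nonneg.2 h1) (add_sub_cancel _ _)
  simp only [Pi.pow_apply, smul_eq_mul] at hconv
  rw [hsplit]
  linarith [mul_nonneg h0 (sq_nonneg ‖v - p‖)]

/-- `y = prox_{l f} c`, in the form: `y` minimizes `v ↦ f v + ‖c - v‖² / (2 l)`. -/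
def IsProxPoint (f : H → ℝ) (l : ℝ) (c y : H) : Prop :=
  ∀ v, f y + (1 / (2 * l)) * ‖c - y‖ ^ 2 ≤ f v + (1 / (2 * l)) * ‖c - v‖ ^ 2

namespace IsProxPoint

variable {f : H → ℝ} {l l' : ℝ} {c c' y y' : H}

theorem inner_le (hy : IsProxPoint f l c y) (hf : ConvexOn ℝ Set.univ f) (hl : 0 < l) (v : H) :
    ⟪c - y, v - y⟫_ℝ ≤ l * (f v - f y) := by
  have hsegment : ∀ t ∈ Set.Ioc (0 : ℝ) 1,
      ⟪c - y, v - y⟫_ℝ - l * (f v - f y) ≤ t * (‖v - y‖ ^ 2 / 2) := by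
    rintro t ⟨ht, ht1⟩
    have hmin := hy ((1 - t) • y + t • v)
    have hconv := hf.2 (Set.mem_univ y) (Set.mem_univ v) (sub_nonneg.2 ht1) ht.le
      (sub_add_cancel 1 t)
    have hsplit : c - ((1 - t) • y + t • v) = (c - y) - t • (v - y) := by module
    rw [hsplit, norm_sub_sq_real (c - y), real_inner_smul_right, norm_smul,
      Real.norm_of_nonneg ht.le] at hmin
    simp only [smul_eq_mul] at hconv
    field_simp at hmin
    refine le_of_mul_le_mul_left ?_ (mul_pos two_pos ht)
    linarith [mul_le_mul_of_nonneg_left hconv (mul_pos two_pos hl).le]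
  have hlim : Tendsto (fun t : ℝ ↦ t * (‖v - y‖ ^ 2 / 2)) (𝓝[>] 0) (𝓝 0) :=
    ((continuous_id.mul continuous_const).tendsto' 0 0 (zero_mul _)).mono_left nhdsWithin_le_nhds
  exact sub_nonpos.1 <| ge_of_tendsto hlim <|
    mem_of_superset (Ioc_mem_nhdsGT zero_lt_one) hsegment

theorem norm_sub_le (hy : IsProxPoint f l c y) (hy' : IsProxPoint f l' c' y')
    (hf : ConvexOn ℝ Set.univ f) (hl : 0 < l) (hl' : 0 < l') :
    ‖y - y'‖ ≤ ‖c - c'‖ + ‖(1 - l / l') • (c' - y')‖ := by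
  have hvi : ⟪c - y, y' - y⟫_ℝ ≤ l * (f y' - f y) := hy.inner_le hf hl y'
  have hvi' : (l / l') * ⟪c' - y', y - y'⟫_ℝ ≤ l * (f y - f y') := by
    calc (l / l') * ⟪c' - y', y - y'⟫_ℝ ≤ (l / l') * (l' * (f y - f y')) := by
          gcongr; exact hy'.inner_le hf hl' y
      _ = l * (f y - f y') := by field_simp
  have hsplit : (c - c') + (1 - l / l') • (c' - y')
      = (c - y) + (y - y') - (l / l') • (c' - y') := by module
  have hsq : ‖y - y'‖ ^ 2 ≤ ⟪(c - c') + (1 - l / l') • (c' - y'), y - y'⟫_ℝ := by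
    rw [hsplit, inner_sub_left, inner_add_left, real_inner_self_eq_norm_sq, real_inner_smul_left]
    rw [← neg_sub y y', inner_neg_right] at hvi
    linarith
  rcases (norm_nonneg (y - y')).eq_or_lt with h0 | hpos
  · rw [← h0]; positivity
  · refine le_of_mul_le_mul_right ?_ hpos
    calc ‖y - y'‖ * ‖y - y'‖ = ‖y - y'‖ ^ 2 := (sq _).symm
      _ ≤ ‖(c - c') + (1 - l / l') • (c' - y')‖ * ‖y - y'‖ := hsq.trans (real_inner_le_norm _ _)
      _ ≤ (‖c - c'‖ + ‖(1 - l / l') • (c' - y')‖) * ‖y - y'‖ := by gcongr; exact norm_add_le _ _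

theorem norm_sub_sq_add_le {z d : H} (hy : IsProxPoint f l (z + l • d) y)
    (hf : ConvexOn ℝ Set.univ f) (hl : 0 < l) (p : H) :
    ‖y - p‖ ^ 2 + ‖z - y‖ ^ 2 ≤ ‖z - p‖ ^ 2 + l * (2 * (f p - f y - ⟪d, p - y⟫_ℝ)) := by
  have hvi := hy.inner_le hf hl p
  rw [add_sub_right_comm, inner_add_left, real_inner_smul_left] at hvi
  rw [← sub_sub_sub_cancel_right z p y, norm_sub_sq_real (z - y), norm_sub_rev y p]
  linarith

theorem exists_isBigO_sub_le (hy : IsProxPoint f l c y) (hf : ConvexOn ℝ Set.univ f) (hl : 0 < l)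
    {ι : Type*} {F : Filter ι} {v : ι → H} (hv : v =O[F] fun _ ↦ (1 : ℝ)) (a : ℝ) :
    ∃ b : ι → ℝ, b =O[F] (fun _ ↦ (1 : ℝ)) ∧ ∀ n, a - f (v n) ≤ b n := by
  refine ⟨fun n ↦ a - f y + l⁻¹ * (‖c - y‖ * ‖v n - y‖), ?_, fun n ↦ ?_⟩
  · exact (isBigO_const_one ℝ _ F).add
      (((hv.sub (isBigO_const_one ℝ y F)).norm_left.const_mul_left _).const_mul_left _)
  · have hvi : l⁻¹ * ⟪c - y, v n - y⟫_ℝ ≤ f (v n) - f y :=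
      (inv_mul_le_iff₀ hl).2 (hy.inner_le hf hl (v n))
    have hcs : l⁻¹ * -(‖c - y‖ * ‖v n - y‖) ≤ l⁻¹ * ⟪c - y, v n - y⟫_ℝ := by
      gcongr
      exact neg_le_of_abs_le (abs_real_inner_le_norm _ _)
    linarith

end IsProxPoint

theorem norm_forward_sub_forward_le {κ : ℝ} {g : H → H} (hg : Cocoercive κ g) {l : ℝ} (hl : 0 ≤ l)
    (hlκ : l ≤ 2 * κ) (l₀ b b₀ : ℝ) (z z₀ d d₀ : H) :
    ‖(z + l • (-g z + b • d)) - (z₀ + l₀ • (-g z₀ + b₀ • d₀))‖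
      ≤ ‖z - z₀‖ + (‖(l - l₀) • g z₀‖ + ‖(l * b) • d‖ + ‖(l₀ * b₀) • d₀‖) := by
  have hsplit : (z + l • (-g z + b • d)) - (z₀ + l₀ • (-g z₀ + b₀ • d₀))
      = ((z - l • g z) - (z₀ - l • g z₀))
        + (-((l - l₀) • g z₀) + (l * b) • d - (l₀ * b₀) • d₀) := by module
  rw [hsplit]
  refine (norm_add_le _ _).trans (add_le_add (hg.norm_sub_smul_sub_le hl hlκ z z₀) ?_)
  refine (norm_sub_le _ _).trans (add_le_add_left ((norm_add_le _ _).trans_eq ?_) _)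
  rw [norm_neg]

theorem norm_convexComb_sub_convexComb_le {T : H → H} (hT : Cocoercive 1 T) {a : ℝ} (ha : a ≤ 1)
    (a₀ : ℝ) (u y y₀ : H) :
    ‖(a • u + (1 - a) • T y) - (a₀ • u + (1 - a₀) • T y₀)‖
      ≤ (1 - a) * ‖y - y₀‖ + ‖(a - a₀) • (u - T y₀)‖ := by
  have hsplit : (a • u + (1 - a) • T y) - (a₀ • u + (1 - a₀) • T y₀)
      = (1 - a) • (T y - T y₀) + (a - a₀) • (u - T y₀) := by module
  have ha' : 0 ≤ 1 - a := sub_nonneg.2 ha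
  have hnonexp : ‖T y - T y₀‖ ≤ ‖y - y₀‖ := by simpa using hT.mul_norm_sub_le y y₀
  rw [hsplit]
  refine (norm_add_le _ _).trans ?_
  rw [norm_smul (1 - a), Real.norm_of_nonneg ha']
  gcongr

end Operators

section BaillonHaddad

variable {H : Type*} [NormedAddCommGroup H] [InnerProductSpace ℝ H] [CompleteSpace H]
  {h : H → ℝ} {g : H → H}

theorem hasDerivAt_comp_line_of_hasGradientAt (hg : ∀ x, HasGradientAt h (g x) x) (x v : H)
    (t : ℝ) : HasDerivAt (fun s : ℝ ↦ h (x + s • v)) ⟪g (x + t • v), v⟫_ℝ t := by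
  have hline : HasDerivAt (fun s : ℝ ↦ x + s • v) v t := by
    simpa using ((hasDerivAt_id t).smul_const v).const_add x
  exact ((hg (x + t • v)).hasFDerivAt.comp_hasDerivAt t hline).congr_deriv (by simp)

theorem add_inner_gradient_le_of_convexOn (hh : ConvexOn ℝ Set.univ h)
    (hg : ∀ x, HasGradientAt h (g x) x) (x y : H) : h x + ⟪g x, y - x⟫_ℝ ≤ h y := by
  have hline : ConvexOn ℝ Set.univ (fun t : ℝ ↦ h (x + t • (y - x))) := by
    simpa [Function.comp_def, AffineMap.lineMap_apply, add_comm] using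
      hh.comp_affineMap (AffineMap.lineMap x y : ℝ →ᵃ[ℝ] H)
  have hslope := hline.le_slope_of_hasDerivAt (Set.mem_univ 0) (Set.mem_univ 1) zero_lt_one
    (hasDerivAt_comp_line_of_hasGradientAt hg x (y - x) 0)
  simp only [slope_def_field, zero_smul, one_smul, add_zero, sub_zero, div_one,
    add_sub_cancel] at hslope
  linarith

theorem le_add_inner_gradient_add_sq (hg : ∀ x, HasGradientAt h (g x) x) {K : ℝ}
    (hlip : ∀ x y, ‖g x - g y‖ ≤ K * ‖x - y‖) (x v : H) :
    h (x + v) ≤ h x + ⟪g x, v⟫_ℝ + K / 2 * ‖v‖ ^ 2 := by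
  have hφ := hasDerivAt_comp_line_of_hasGradientAt hg x v
  have hB (t : ℝ) : HasDerivAt (fun s : ℝ ↦ h x + s * ⟪g x, v⟫_ℝ + s ^ 2 * (K / 2 * ‖v‖ ^ 2))
      (⟪g x, v⟫_ℝ + t * (K * ‖v‖ ^ 2)) t := by
    have := (((hasDerivAt_id t).mul_const ⟪g x, v⟫_ℝ).const_add (h x)).add
      ((hasDerivAt_pow 2 t).mul_const (K / 2 * ‖v‖ ^ 2))
    refine this.congr_deriv ?_
    push_cast
    ring
  have hderiv : ∀ t ∈ Set.Ico (0 : ℝ) 1,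
      ⟪g (x + t • v), v⟫_ℝ ≤ ⟪g x, v⟫_ℝ + t * (K * ‖v‖ ^ 2) := fun t ht ↦ by
    have hgt : ‖g (x + t • v) - g x‖ ≤ K * (t * ‖v‖) := by
      simpa [norm_smul, abs_of_nonneg ht.1] using hlip (x + t • v) x
    have hinner : ⟪g (x + t • v) - g x, v⟫_ℝ ≤ K * (t * ‖v‖) * ‖v‖ :=
      (real_inner_le_norm _ _).trans (by gcongr)
    rw [inner_sub_left] at hinner
    linarith
  have hmain := image_le_of_deriv_right_le_deriv_boundary
    (fun t _ ↦ (hφ t).continuousAt.continuousWithinAt) (fun t _ ↦ (hφ t).hasDerivWithinAt)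
    (by simp) (fun t _ ↦ (hB t).continuousAt.continuousWithinAt)
    (fun t _ ↦ (hB t).hasDerivWithinAt) hderiv (Set.right_mem_Icc.2 zero_le_one)
  simpa using hmain

theorem mul_norm_sub_sq_le_of_gradient (hh : ConvexOn ℝ Set.univ h)
    (hg : ∀ x, HasGradientAt h (g x) x) {L : ℝ} (hL : 0 < L)
    (hlip : ∀ x y, ‖g x - g y‖ ≤ (1 / L) * ‖x - y‖) (x y : H) :
    L / 2 * ‖g y - g x‖ ^ 2 ≤ h y - h x - ⟪g x, y - x⟫_ℝ := by
  -- Compare the tangent at `x` with the descent bound at `y`, both at the point `y - L • v`.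
  set v := g y - g x with hv
  have hlower : h x + ⟪g x, y + -(L • v) - x⟫_ℝ ≤ h (y + -(L • v)) :=
    add_inner_gradient_le_of_convexOn hh hg x _
  have hupper : h (y + -(L • v)) ≤ h y + ⟪g y, -(L • v)⟫_ℝ + 1 / L / 2 * ‖-(L • v)‖ ^ 2 :=
    le_add_inner_gradient_add_sq hg hlip y _
  have hvv : ⟪g y, v⟫_ℝ - ⟪g x, v⟫_ℝ = ‖v‖ ^ 2 := by
    rw [← inner_sub_left, ← hv, real_inner_self_eq_norm_sq]
  rw [add_sub_right_comm, inner_add_right, inner_neg_right, real_inner_smul_right] at hlower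
  rw [inner_neg_right, real_inner_smul_right, norm_neg, norm_smul, Real.norm_of_nonneg hL.le]
    at hupper
  have hsq : 1 / L / 2 * (L * ‖v‖) ^ 2 = L / 2 * ‖v‖ ^ 2 := by field_simp
  linarith [congrArg (L * ·) hvv]

theorem cocoercive_of_hasGradientAt (hh : ConvexOn ℝ Set.univ h)
    (hg : ∀ x, HasGradientAt h (g x) x) {L : ℝ} (hL : 0 < L)
    (hlip : ∀ x y, ‖g x - g y‖ ≤ (1 / L) * ‖x - y‖) : Cocoercive L g := fun x y ↦ by
  have hxy := mul_norm_sub_sq_le_of_gradient hh hg hL hlip x y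
  have hyx := mul_norm_sub_sq_le_of_gradient hh hg hL hlip y x
  rw [norm_sub_rev, ← neg_sub x y, inner_neg_right] at hxy
  rw [inner_sub_left]
  linarith

end BaillonHaddad

section StepSizes

/-- The step-size conditions that drive the convergence proof, stated asymptotically. In the
paper's numbering `not_summable` is (C1), `β_isLittleO` is (C7), and the remaining `o(α_{n+1})`
conditions follow from (C2), (C3) and (C5) because `λ_n → 0`. -/
structure StepSizes (θ lam β α : ℕ → ℝ) : Prop where
  lam_pos : ∀ n, 0 < lam n
  α_pos : ∀ n, 0 < α n
  α_le_one : ∀ n, α n ≤ 1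
  lam_tendsto : Tendsto lam atTop (𝓝 0)
  α_tendsto : Tendsto α atTop (𝓝 0)
  not_summable : ¬ Summable α
  lam_ratio : (fun n ↦ 1 - lam (n + 1) / lam n) =o[atTop] fun n ↦ α (n + 1)
  α_ratio : α ~[atTop] fun n ↦ α (n + 1)
  θ_isLittleO : θ =o[atTop] fun n ↦ α (n + 1)
  β_isLittleO : β =o[atTop] fun n ↦ α (n + 1)

theorem isLittleO_one_sub_div_of_tendsto {lam α : ℕ → ℝ} (hlam_pos : ∀ n, 0 < lam n)
    (hα_pos : ∀ n, 0 < α n) (hlam : Tendsto lam atTop (𝓝 0))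
    (h : Tendsto (fun n ↦ (1 / α (n + 1)) * |1 / lam (n + 1) - 1 / lam n|) atTop (𝓝 0)) :
    (fun n ↦ 1 - lam (n + 1) / lam n) =o[atTop] fun n ↦ α (n + 1) := by
  refine (isLittleO_iff_tendsto fun n hn ↦ absurd hn (hα_pos _).ne').2
    (tendsto_zero_iff_norm_tendsto_zero.2 ?_)
  have hmul := ((tendsto_add_atTop_iff_nat 1).2 hlam).mul h
  rw [zero_mul] at hmul
  refine hmul.congr fun n ↦ ?_
  have hratio : 1 - lam (n + 1) / lam n = lam (n + 1) * (1 / lam (n + 1) - 1 / lam n) := by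
    have := (hlam_pos (n + 1)).ne'
    field_simp
  rw [hratio, norm_div, norm_mul, Real.norm_of_nonneg (hlam_pos _).le,
    Real.norm_of_nonneg (hα_pos _).le, Real.norm_eq_abs]
  ring

theorem isEquivalent_succ_of_tendsto {lam α : ℕ → ℝ} (hlam_pos : ∀ n, 0 < lam n)
    (hα_pos : ∀ n, 0 < α n) (hlam : Tendsto lam atTop (𝓝 0))
    (h : Tendsto (fun n ↦ (1 / lam (n + 1)) * |1 - α n / α (n + 1)|) atTop (𝓝 0)) :
    α ~[atTop] fun n ↦ α (n + 1) := by
  refine (isLittleO_iff_tendsto fun n hn ↦ absurd hn (hα_pos _).ne').2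
    (tendsto_zero_iff_norm_tendsto_zero.2 ?_)
  have hmul := ((tendsto_add_atTop_iff_nat 1).2 hlam).mul h
  rw [zero_mul] at hmul
  refine hmul.congr fun n ↦ ?_
  have hratio : (α n - α (n + 1)) / α (n + 1) = -(1 - α n / α (n + 1)) := by
    have := (hα_pos (n + 1)).ne'
    field_simp
    ring
  rw [← mul_assoc, mul_one_div_cancel (hlam_pos _).ne', one_mul, Pi.sub_apply, hratio, norm_neg,
    Real.norm_eq_abs]

theorem isLittleO_of_tendsto_div_mul {θ lam α : ℕ → ℝ} (hlam_pos : ∀ n, 0 < lam n)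
    (hα_pos : ∀ n, 0 < α n) (hlam : Tendsto lam atTop (𝓝 0))
    (h : Tendsto (fun n ↦ θ n / (α (n + 1) * lam (n + 1))) atTop (𝓝 0)) :
    θ =o[atTop] fun n ↦ α (n + 1) := by
  refine (isLittleO_iff_tendsto fun n hn ↦ absurd hn (hα_pos _).ne').2 ?_
  have hmul := h.mul ((tendsto_add_atTop_iff_nat 1).2 hlam)
  rw [zero_mul] at hmul
  refine hmul.congr fun n ↦ ?_
  have := (hlam_pos (n + 1)).ne'
  field_simp

namespace StepSizes

variable {θ lam β α e : ℕ → ℝ}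

theorem of_tendsto (hlam_pos : ∀ n, 0 < lam n) (hα_pos : ∀ n, 0 < α n) (hα_le : ∀ n, α n ≤ 1)
    (hlam : Tendsto lam atTop (𝓝 0)) (hα : Tendsto α atTop (𝓝 0)) (hC1 : ¬ Summable α)
    (hC2 : Tendsto (fun n ↦ (1 / α (n + 1)) * |1 / lam (n + 1) - 1 / lam n|) atTop (𝓝 0))
    (hC3 : Tendsto (fun n ↦ (1 / lam (n + 1)) * |1 - α n / α (n + 1)|) atTop (𝓝 0))
    (hC5 : Tendsto (fun n ↦ θ n / (α (n + 1) * lam (n + 1))) atTop (𝓝 0))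
    (hC7 : Tendsto (fun n ↦ β n / α (n + 1)) atTop (𝓝 0)) : StepSizes θ lam β α where
  lam_pos := hlam_pos
  α_pos := hα_pos
  α_le_one := hα_le
  lam_tendsto := hlam
  α_tendsto := hα
  not_summable := hC1
  lam_ratio := isLittleO_one_sub_div_of_tendsto hlam_pos hα_pos hlam hC2
  α_ratio := isEquivalent_succ_of_tendsto hlam_pos hα_pos hlam hC3
  θ_isLittleO := isLittleO_of_tendsto_div_mul hlam_pos hα_pos hlam hC5
  β_isLittleO := (isLittleO_iff_tendsto fun _ hn ↦ absurd hn (hα_pos _).ne').2 hC7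

theorem tendsto_of_isLittleO (hs : StepSizes θ lam β α) (he : e =o[atTop] fun n ↦ α (n + 1)) :
    Tendsto e atTop (𝓝 0) :=
  he.trans_tendsto ((tendsto_add_atTop_iff_nat 1).2 hs.α_tendsto)

theorem isLittleO_comp_succ (hs : StepSizes θ lam β α) (he : e =o[atTop] fun n ↦ α (n + 1)) :
    (fun n ↦ e (n + 1)) =o[atTop] fun n ↦ α (n + 1) :=
  (he.trans_isBigO hs.α_ratio.symm.isBigO).comp_tendsto (tendsto_add_atTop_nat 1)

theorem isLittleO_lam_mul (hs : StepSizes θ lam β α) (he : e =o[atTop] fun n ↦ α (n + 1)) :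
    (fun n ↦ lam n * e n) =o[atTop] fun n ↦ α (n + 1) := by
  simpa using (hs.lam_tendsto.isBigO_one ℝ).mul_isLittleO he

theorem isLittleO_lam_succ_sub (hs : StepSizes θ lam β α) :
    (fun n ↦ lam (n + 1) - lam n) =o[atTop] fun n ↦ α (n + 1) := by
  refine (hs.isLittleO_lam_mul hs.lam_ratio).neg_left.congr_left fun n ↦ ?_
  have := (hs.lam_pos n).ne'
  field_simp
  ring

theorem isLittleO_α_succ_sub (hs : StepSizes θ lam β α) :
    (fun n ↦ α (n + 1) - α n) =o[atTop] fun n ↦ α (n + 1) :=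
  hs.α_ratio.isLittleO.neg_left.congr_left fun n ↦ neg_sub (α n) _

end StepSizes

end StepSizes

/-- One inner stage of the algorithm, from the index `n = 1` on: it turns the input sequence `w`
into the output sequence `w'` by extrapolation, a conjugate-gradient-type direction for the gradient
`g`, a proximal step for `f` and a Halpern step for `T` with anchor `u`. -/
structure IsInertialProxStage {H : Type*} [NormedAddCommGroup H] [InnerProductSpace ℝ H]
    (θ lam β α : ℕ → ℝ) (f : H → ℝ) (g T : H → H) (u : H) (w z d y w' : ℕ → H) : Prop where
  extrapolation : ∀ n ≥ 1, z n = w n + θ n • (w n - w (n - 1))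
  direction : ∀ n ≥ 1, d (n + 1) = -g (z n) + β n • d n
  prox : ∀ n ≥ 1, IsProxPoint f (lam n) (z n + lam n • d (n + 1)) (y n)
  output : ∀ n ≥ 1, w' n = α n • u + (1 - α n) • T (y n)

namespace IsInertialProxStage

variable {H : Type*} [NormedAddCommGroup H] [InnerProductSpace ℝ H] {θ lam β α : ℕ → ℝ}
  {f : H → ℝ} {g T : H → H} {u p : H} {w z d y w' : ℕ → H} {κ : ℝ}

theorem isBigO_one_z (hstage : IsInertialProxStage θ lam β α f g T u w z d y w')
    (hs : StepSizes θ lam β α) (hw : w =O[atTop] fun _ ↦ (1 : ℝ)) :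
    z =O[atTop] fun _ ↦ (1 : ℝ) := by
  have hθ := (hs.tendsto_of_isLittleO hs.θ_isLittleO).isBigO_one ℝ
  have hθw : (fun n ↦ θ n • (w n - w (n - 1))) =O[atTop] fun _ ↦ (1 : ℝ) := by
    simpa using hθ.smul (isBigO_one_sub_pred hw)
  refine (hw.add hθw).congr' ?_ .rfl
  filter_upwards [eventually_ge_atTop 1] with n hn using (hstage.extrapolation n hn).symm

theorem isBigO_one_d (hstage : IsInertialProxStage θ lam β α f g T u w z d y w')
    (hs : StepSizes θ lam β α) (hg : Cocoercive κ g) (hκ : 0 < κ)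
    (hw : w =O[atTop] fun _ ↦ (1 : ℝ)) : d =O[atTop] fun _ ↦ (1 : ℝ) :=
  isBigO_one_of_succ_eq_add_smul (hg.isBigO_one_comp hκ (hstage.isBigO_one_z hs hw)).neg_left
    (hs.tendsto_of_isLittleO hs.β_isLittleO) (eventually_atTop.2 ⟨1, hstage.direction⟩)

theorem isBigO_one_output (hstage : IsInertialProxStage θ lam β α f g T u w z d y w')
    (hs : StepSizes θ lam β α) (hT : Cocoercive 1 T) (hy : y =O[atTop] fun _ ↦ (1 : ℝ)) :
    w' =O[atTop] fun _ ↦ (1 : ℝ) := by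
  have hα := hs.α_tendsto.isBigO_one ℝ
  have hTy := hT.isBigO_one_comp one_pos hy
  have hcomb : (fun n ↦ α n • u + (1 - α n) • T (y n)) =O[atTop] fun _ ↦ (1 : ℝ) := by
    simpa using (hα.smul (isBigO_const_one ℝ u _)).add
      (((isBigO_const_one ℝ (1 : ℝ) _).sub hα).smul hTy)
  refine hcomb.congr' ?_ .rfl
  filter_upwards [eventually_ge_atTop 1] with n hn using (hstage.output n hn).symm

theorem exists_norm_z_succ_sub_le (hstage : IsInertialProxStage θ lam β α f g T u w z d y w')
    (hs : StepSizes θ lam β α) (hw : w =O[atTop] fun _ ↦ (1 : ℝ)) :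
    ∃ e : ℕ → ℝ, e =o[atTop] (fun n ↦ α (n + 1)) ∧
      ∀ᶠ n in atTop, ‖z (n + 1) - z n‖ ≤ ‖w (n + 1) - w n‖ + e n := by
  have hθw : (fun n ↦ ‖θ n • (w n - w (n - 1))‖) =o[atTop] fun n ↦ α (n + 1) :=
    isLittleO_norm_smul_of_isBigO_one hs.θ_isLittleO (isBigO_one_sub_pred hw)
  refine ⟨_, (hs.isLittleO_comp_succ hθw).add hθw, ?_⟩
  filter_upwards [eventually_ge_atTop 1] with n hn
  rw [hstage.extrapolation (n + 1) (by lia), hstage.extrapolation n hn, add_sub_add_comm]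
  exact (norm_add_le _ _).trans (add_le_add_right (norm_sub_le _ _) _)

theorem exists_norm_forward_succ_sub_le
    (hstage : IsInertialProxStage θ lam β α f g T u w z d y w') (hs : StepSizes θ lam β α)
    (hg : Cocoercive κ g) (hκ : 0 < κ) (hw : w =O[atTop] fun _ ↦ (1 : ℝ)) :
    ∃ e : ℕ → ℝ, e =o[atTop] (fun n ↦ α (n + 1)) ∧ ∀ᶠ n in atTop,
      ‖(z (n + 1) + lam (n + 1) • d (n + 2)) - (z n + lam n • d (n + 1))‖
        ≤ ‖z (n + 1) - z n‖ + e n := by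
  have hd := hstage.isBigO_one_d hs hg hκ hw
  have hgz := hg.isBigO_one_comp hκ (hstage.isBigO_one_z hs hw)
  have hlamβ := hs.isLittleO_lam_mul hs.β_isLittleO
  have hgz' := isLittleO_norm_smul_of_isBigO_one hs.isLittleO_lam_succ_sub hgz
  have hd' := isLittleO_norm_smul_of_isBigO_one hlamβ hd
  refine ⟨_, (hgz'.add (hs.isLittleO_comp_succ hd')).add hd', ?_⟩
  have hlam : ∀ᶠ n in atTop, lam (n + 1) ≤ 2 * κ :=
    ((tendsto_add_atTop_iff_nat 1).2 hs.lam_tendsto).eventually_le_const (by positivity)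
  filter_upwards [eventually_ge_atTop 1, hlam] with n hn hlamn
  rw [hstage.direction (n + 1) (by lia), hstage.direction n hn]
  exact norm_forward_sub_forward_le hg (hs.lam_pos _).le hlamn _ _ _ _ _ _ _

theorem exists_norm_prox_succ_sub_le
    (hstage : IsInertialProxStage θ lam β α f g T u w z d y w') (hs : StepSizes θ lam β α)
    (hf : ConvexOn ℝ Set.univ f) (hg : Cocoercive κ g) (hκ : 0 < κ)
    (hw : w =O[atTop] fun _ ↦ (1 : ℝ)) (hy : y =O[atTop] fun _ ↦ (1 : ℝ)) :
    ∃ e : ℕ → ℝ, e =o[atTop] (fun n ↦ α (n + 1)) ∧ ∀ᶠ n in atTop, ‖y (n + 1) - y n‖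
      ≤ ‖(z (n + 1) + lam (n + 1) • d (n + 2)) - (z n + lam n • d (n + 1))‖ + e n := by
  have hd := (hstage.isBigO_one_d hs hg hκ hw).comp_tendsto (tendsto_add_atTop_nat 1)
  have hlamd : (fun n ↦ lam n • d (n + 1)) =O[atTop] fun _ ↦ (1 : ℝ) := by
    simpa using (hs.lam_tendsto.isBigO_one ℝ).smul hd
  have hres := ((hstage.isBigO_one_z hs hw).add hlamd).sub hy
  refine ⟨_, isLittleO_norm_smul_of_isBigO_one hs.lam_ratio hres, ?_⟩
  filter_upwards [eventually_ge_atTop 1] with n hn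
  exact (hstage.prox (n + 1) (by lia)).norm_sub_le (hstage.prox n hn) hf (hs.lam_pos _)
    (hs.lam_pos _)

theorem exists_norm_output_succ_sub_le
    (hstage : IsInertialProxStage θ lam β α f g T u w z d y w') (hs : StepSizes θ lam β α)
    (hT : Cocoercive 1 T) (hy : y =O[atTop] fun _ ↦ (1 : ℝ)) :
    ∃ e : ℕ → ℝ, e =o[atTop] (fun n ↦ α (n + 1)) ∧ ∀ᶠ n in atTop,
      ‖w' (n + 1) - w' n‖ ≤ (1 - α (n + 1)) * ‖y (n + 1) - y n‖ + e n := by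
  have hres := (isBigO_const_one ℝ u atTop).sub (hT.isBigO_one_comp one_pos hy)
  refine ⟨_, isLittleO_norm_smul_of_isBigO_one hs.isLittleO_α_succ_sub hres, ?_⟩
  filter_upwards [eventually_ge_atTop 1] with n hn
  rw [hstage.output (n + 1) (by lia), hstage.output n hn]
  exact norm_convexComb_sub_convexComb_le hT (hs.α_le_one _) _ _ _ _

theorem exists_norm_succ_sub_le_mul
    (hstage : IsInertialProxStage θ lam β α f g T u w z d y w') (hs : StepSizes θ lam β α)
    (hf : ConvexOn ℝ Set.univ f) (hg : Cocoercive κ g) (hκ : 0 < κ) (hT : Cocoercive 1 T)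
    (hw : w =O[atTop] fun _ ↦ (1 : ℝ)) (hy : y =O[atTop] fun _ ↦ (1 : ℝ)) :
    ∃ e : ℕ → ℝ, e =o[atTop] (fun n ↦ α (n + 1)) ∧ ∀ᶠ n in atTop,
      ‖w' (n + 1) - w' n‖ ≤ (1 - α (n + 1)) * ‖w (n + 1) - w n‖ + e n := by
  obtain ⟨e₁, he₁, hz⟩ := hstage.exists_norm_z_succ_sub_le hs hw
  obtain ⟨e₂, he₂, hforward⟩ := hstage.exists_norm_forward_succ_sub_le hs hg hκ hw
  obtain ⟨e₃, he₃, hprox⟩ := hstage.exists_norm_prox_succ_sub_le hs hf hg hκ hw hy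
  obtain ⟨e₄, he₄, houtput⟩ := hstage.exists_norm_output_succ_sub_le hs hT hy
  refine ⟨fun n ↦ ‖e₁ n + e₂ n + e₃ n‖ + e₄ n, ((he₁.add he₂).add he₃).norm_left.add he₄, ?_⟩
  filter_upwards [hz, hforward, hprox, houtput] with n hz hforward hprox houtput
  have hα : 0 ≤ 1 - α (n + 1) := sub_nonneg.2 (hs.α_le_one _)
  have hα' : 1 - α (n + 1) ≤ 1 := sub_le_self _ (hs.α_pos _).le
  calc ‖w' (n + 1) - w' n‖ ≤ (1 - α (n + 1)) * ‖y (n + 1) - y n‖ + e₄ n := houtput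
    _ ≤ (1 - α (n + 1)) * (‖w (n + 1) - w n‖ + ‖e₁ n + e₂ n + e₃ n‖) + e₄ n := by
        gcongr
        linarith [Real.le_norm_self (e₁ n + e₂ n + e₃ n)]
    _ ≤ (1 - α (n + 1)) * ‖w (n + 1) - w n‖ + (‖e₁ n + e₂ n + e₃ n‖ + e₄ n) := by
        linarith [mul_le_of_le_one_left (norm_nonneg (e₁ n + e₂ n + e₃ n)) hα']

theorem residual_sq_le_sub_add (hstage : IsInertialProxStage θ lam β α f g T u w z d y w')
    (hs : StepSizes θ lam β α) (hf : ConvexOn ℝ Set.univ f) (hT : Cocoercive 1 T)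
    (hp : Function.IsFixedPt T p) {n : ℕ} (hn : 1 ≤ n) :
    ‖z n - y n‖ ^ 2 + ‖y n - T (y n)‖ ^ 2 ≤ ‖w n - p‖ ^ 2 - ‖w' n - p‖ ^ 2
      + (α n * ‖u - p‖ ^ 2 + lam n * (2 * (f p - f (y n) - ⟪d (n + 1), p - y n⟫_ℝ))
        + (2 * ‖w n - p‖ + ‖θ n • (w n - w (n - 1))‖) * ‖θ n • (w n - w (n - 1))‖) := by
  have hoff := norm_add_sub_sq_le (w n) (θ n • (w n - w (n - 1))) p
  rw [← hstage.extrapolation n hn] at hoff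
  have hprox := (hstage.prox n hn).norm_sub_sq_add_le hf (hs.lam_pos n) p
  have hfirm := hT.norm_sub_sq_add_le_of_isFixedPt hp (y n)
  have hhalpern := norm_convexComb_sub_sq_le (hs.α_pos n).le (hs.α_le_one n) u (T (y n)) p
  rw [← hstage.output n hn] at hhalpern
  linarith

theorem exists_residual_sq_le (hstage : IsInertialProxStage θ lam β α f g T u w z d y w')
    (hs : StepSizes θ lam β α) (hf : ConvexOn ℝ Set.univ f) (hg : Cocoercive κ g) (hκ : 0 < κ)
    (hT : Cocoercive 1 T) (hp : Function.IsFixedPt T p)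
    (hw : w =O[atTop] fun _ ↦ (1 : ℝ)) (hy : y =O[atTop] fun _ ↦ (1 : ℝ)) :
    ∃ e : ℕ → ℝ, Tendsto e atTop (𝓝 0) ∧ ∀ᶠ n in atTop,
      ‖z n - y n‖ ^ 2 + ‖y n - T (y n)‖ ^ 2 ≤ ‖w n - p‖ ^ 2 - ‖w' n - p‖ ^ 2 + e n := by
  obtain ⟨b, hb, hfb⟩ := (hstage.prox 1 le_rfl).exists_isBigO_sub_le hf (hs.lam_pos 1) hy (f p)
  have hd := (hstage.isBigO_one_d hs hg hκ hw).comp_tendsto (tendsto_add_atTop_nat 1)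
  have hinner : (fun n ↦ ‖d (n + 1)‖ * ‖p - y n‖) =O[atTop] fun _ ↦ (1 : ℝ) := by
    simpa using hd.norm_left.mul ((isBigO_const_one ℝ p _).sub hy).norm_left
  have hwp : (fun n ↦ ‖w n - p‖) =O[atTop] fun _ ↦ (1 : ℝ) :=
    (hw.sub (isBigO_const_one ℝ p _)).norm_left
  have hα : Tendsto (fun n ↦ α n * ‖u - p‖ ^ 2) atTop (𝓝 0) := by
    simpa using hs.α_tendsto.mul_const (‖u - p‖ ^ 2)
  have hlam : Tendsto (fun n ↦ lam n * (2 * (b n + ‖d (n + 1)‖ * ‖p - y n‖))) atTop (𝓝 0) :=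
    tendsto_smul_zero_of_isBigO_one hs.lam_tendsto ((hb.add hinner).const_mul_left 2)
  have hθw : Tendsto (fun n ↦ ‖θ n • (w n - w (n - 1))‖) atTop (𝓝 0) :=
    hs.tendsto_of_isLittleO
      (isLittleO_norm_smul_of_isBigO_one hs.θ_isLittleO (isBigO_one_sub_pred hw))
  have hoff : Tendsto (fun n ↦ (2 * ‖w n - p‖ + ‖θ n • (w n - w (n - 1))‖)
      * ‖θ n • (w n - w (n - 1))‖) atTop (𝓝 0) := by
    simpa [mul_comm] using
      tendsto_smul_zero_of_isBigO_one hθw ((hwp.const_mul_left 2).add (hθw.isBigO_one ℝ))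
  refine ⟨_, by simpa using (hα.add hlam).add hoff, ?_⟩
  filter_upwards [eventually_ge_atTop 1] with n hn
  refine (hstage.residual_sq_le_sub_add hs hf hT hp hn).trans ?_
  gcongr
  · exact (hs.lam_pos n).le
  · linarith [hfb n, neg_le_of_abs_le (abs_real_inner_le_norm (d (n + 1)) (p - y n))]

theorem tendsto_input_sub_output (hstage : IsInertialProxStage θ lam β α f g T u w z d y w')
    (hs : StepSizes θ lam β α) (hT : Cocoercive 1 T) (hw : w =O[atTop] fun _ ↦ (1 : ℝ))
    (hy : y =O[atTop] fun _ ↦ (1 : ℝ)) (hzy : Tendsto (fun n ↦ z n - y n) atTop (𝓝 0))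
    (hyT : Tendsto (fun n ↦ y n - T (y n)) atTop (𝓝 0)) :
    Tendsto (fun n ↦ w n - w' n) atTop (𝓝 0) := by
  have hθw : Tendsto (fun n ↦ θ n • (w n - w (n - 1))) atTop (𝓝 0) :=
    tendsto_smul_zero_of_isBigO_one (hs.tendsto_of_isLittleO hs.θ_isLittleO)
      (isBigO_one_sub_pred hw)
  have hhalpern : Tendsto (fun n ↦ α n • (T (y n) - u)) atTop (𝓝 0) :=
    tendsto_smul_zero_of_isBigO_one hs.α_tendsto
      ((hT.isBigO_one_comp one_pos hy).sub (isBigO_const_one ℝ u _))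
  have hsum := ((hzy.add hyT).sub hθw).add hhalpern
  simp only [add_zero, sub_zero] at hsum
  refine hsum.congr' ?_
  filter_upwards [eventually_ge_atTop 1] with n hn
  rw [hstage.output n hn, hstage.extrapolation n hn]
  module

end IsInertialProxStage

/-- A run of Algorithm 1 with `M` stages per iteration, `w · i` being the input of stage `i` and
`w · (M + 1)` the output of the last one. The maps `g i` play the role of the gradients `∇h_i`. -/
structure IsInertialProxCycle {H : Type*} [NormedAddCommGroup H] [InnerProductSpace ℝ H] (M : ℕ)
    (θ lam β α : ℕ → ℝ) (f : ℕ → H → ℝ) (g T : ℕ → H → H) (u x : ℕ → H) (w z d y : ℕ → ℕ → H) :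
    Prop where
  input : ∀ n ≥ 1, w n 1 = x n
  stage : ∀ i ∈ Finset.Icc 1 M, IsInertialProxStage θ lam β α (f i) (g i) (T i) (u i)
    (w · i) (z · i) (d · i) (y · i) (w · (i + 1))
  next : ∀ n ≥ 1, x (n + 1) = w n (M + 1)

namespace IsInertialProxCycle

variable {H : Type*} [NormedAddCommGroup H] [InnerProductSpace ℝ H] {M : ℕ} {θ lam β α : ℕ → ℝ}
  {f : ℕ → H → ℝ} {g T : ℕ → H → H} {u x : ℕ → H} {p : H} {w z d y : ℕ → ℕ → H} {κ : ℕ → ℝ}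

theorem isBigO_one_w_succ (hcycle : IsInertialProxCycle M θ lam β α f g T u x w z d y)
    (hs : StepSizes θ lam β α) (hT : ∀ i ∈ Finset.Icc 1 M, Cocoercive 1 (T i))
    (hy : ∀ i ∈ Finset.Icc 1 M, (y · i) =O[atTop] fun _ ↦ (1 : ℝ)) {i : ℕ}
    (hi : i ∈ Finset.Icc 1 M) : (w · (i + 1)) =O[atTop] fun _ ↦ (1 : ℝ) :=
  (hcycle.stage i hi).isBigO_one_output hs (hT i hi) (hy i hi)

theorem isBigO_one_w (hcycle : IsInertialProxCycle M θ lam β α f g T u x w z d y)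
    (hs : StepSizes θ lam β α) (hT : ∀ i ∈ Finset.Icc 1 M, Cocoercive 1 (T i))
    (hy : ∀ i ∈ Finset.Icc 1 M, (y · i) =O[atTop] fun _ ↦ (1 : ℝ)) {i : ℕ}
    (hi : i ∈ Finset.Icc 1 M) : (w · i) =O[atTop] fun _ ↦ (1 : ℝ) := by
  obtain ⟨hi1, hiM⟩ := Finset.mem_Icc.1 hi
  rcases hi1.eq_or_lt with rfl | hi1
  · rw [← map_add_atTop_eq_nat 1, isBigO_map]
    refine (hcycle.isBigO_one_w_succ hs hT hy (Finset.right_mem_Icc.2 hiM)).congr' ?_ .rfl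
    filter_upwards [eventually_ge_atTop 1] with n hn
    rw [← hcycle.next n hn, Function.comp_apply, hcycle.input (n + 1) (by lia)]
  · obtain ⟨j, rfl⟩ : ∃ j, i = j + 1 := ⟨i - 1, by lia⟩
    exact hcycle.isBigO_one_w_succ hs hT hy (Finset.mem_Icc.2 ⟨by lia, by lia⟩)

theorem tendsto_norm_x_succ_sub (hcycle : IsInertialProxCycle M θ lam β α f g T u x w z d y)
    (hM : 1 ≤ M) (hs : StepSizes θ lam β α)
    (hf : ∀ i ∈ Finset.Icc 1 M, ConvexOn ℝ Set.univ (f i)) (hκ : ∀ i ∈ Finset.Icc 1 M, 0 < κ i)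
    (hg : ∀ i ∈ Finset.Icc 1 M, Cocoercive (κ i) (g i))
    (hT : ∀ i ∈ Finset.Icc 1 M, Cocoercive 1 (T i))
    (hy : ∀ i ∈ Finset.Icc 1 M, (y · i) =O[atTop] fun _ ↦ (1 : ℝ)) :
    Tendsto (fun n ↦ ‖x (n + 1) - x n‖) atTop (𝓝 0) := by
  have hα (n : ℕ) : 0 ≤ α (n + 1) := (hs.α_pos _).le
  obtain ⟨e, he, hle⟩ := exists_isLittleO_le_of_forall_stage hM
    (δ := fun n i ↦ ‖w (n + 1) i - w n i‖) (fun _ _ ↦ norm_nonneg _) hα fun i hi ↦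
      (hcycle.stage i hi).exists_norm_succ_sub_le_mul hs (hf i hi) (hg i hi) (hκ i hi) (hT i hi)
        (hcycle.isBigO_one_w hs hT hy hi) (hy i hi)
  refine tendsto_zero_of_le_one_sub_mul_add_isLittleO (fun _ ↦ norm_nonneg _) hα
    (fun _ ↦ hs.α_le_one _) ((summable_nat_add_iff 1).not.2 hs.not_summable) he ?_
  filter_upwards [hle, eventually_ge_atTop 1] with n hn hn1
  rwa [← hcycle.next (n + 1) (by lia), ← hcycle.next n hn1, hcycle.input (n + 1) (by lia),
    hcycle.input n hn1] at hn

theorem tendsto_norm_sub_sq_sub (hcycle : IsInertialProxCycle M θ lam β α f g T u x w z d y)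
    (hM : 1 ≤ M) (hs : StepSizes θ lam β α) (hT : ∀ i ∈ Finset.Icc 1 M, Cocoercive 1 (T i))
    (hy : ∀ i ∈ Finset.Icc 1 M, (y · i) =O[atTop] fun _ ↦ (1 : ℝ))
    (hx : Tendsto (fun n ↦ ‖x (n + 1) - x n‖) atTop (𝓝 0)) (p : H) :
    Tendsto (fun n ↦ ‖w n 1 - p‖ ^ 2 - ‖w n (M + 1) - p‖ ^ 2) atTop (𝓝 0) := by
  have hp := isBigO_const_one ℝ p (atTop : Filter ℕ)
  refine tendsto_norm_sq_sub_norm_sq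
    ((hcycle.isBigO_one_w hs hT hy (Finset.left_mem_Icc.2 hM)).sub hp)
    ((hcycle.isBigO_one_w_succ hs hT hy (Finset.right_mem_Icc.2 hM)).sub hp) ?_
  rw [tendsto_zero_iff_norm_tendsto_zero]
  refine hx.congr' ?_
  filter_upwards [eventually_ge_atTop 1] with n hn
  rw [sub_sub_sub_cancel_right, hcycle.input n hn, ← hcycle.next n hn, norm_sub_rev]

theorem tendsto_residual_sq (hcycle : IsInertialProxCycle M θ lam β α f g T u x w z d y)
    (hs : StepSizes θ lam β α)
    (hf : ∀ i ∈ Finset.Icc 1 M, ConvexOn ℝ Set.univ (f i)) (hκ : ∀ i ∈ Finset.Icc 1 M, 0 < κ i)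
    (hg : ∀ i ∈ Finset.Icc 1 M, Cocoercive (κ i) (g i))
    (hT : ∀ i ∈ Finset.Icc 1 M, Cocoercive 1 (T i))
    (hp : ∀ i ∈ Finset.Icc 1 M, Function.IsFixedPt (T i) p)
    (hy : ∀ i ∈ Finset.Icc 1 M, (y · i) =O[atTop] fun _ ↦ (1 : ℝ)) {i : ℕ}
    (hi : i ∈ Finset.Icc 1 M) :
    Tendsto (fun n ↦ ‖z n i - y n i‖ ^ 2 + ‖y n i - T i (y n i)‖ ^ 2) atTop (𝓝 0) := by
  have hM : 1 ≤ M := (Finset.mem_Icc.1 hi).1.trans (Finset.mem_Icc.1 hi).2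
  have hx := hcycle.tendsto_norm_x_succ_sub hM hs hf hκ hg hT hy
  exact tendsto_zero_of_le_sub_succ_add
    (b := fun n j ↦ ‖z n j - y n j‖ ^ 2 + ‖y n j - T j (y n j)‖ ^ 2) (fun _ _ ↦ by positivity)
    (hcycle.tendsto_norm_sub_sq_sub hM hs hT hy hx p)
    (fun j hj ↦ (hcycle.stage j hj).exists_residual_sq_le hs (hf j hj) (hg j hj) (hκ j hj)
      (hT j hj) (hp j hj) (hcycle.isBigO_one_w hs hT hy hj) (hy j hj)) hi

theorem tendsto_x_sub_w (hcycle : IsInertialProxCycle M θ lam β α f g T u x w z d y)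
    (hstep : ∀ i ∈ Finset.Icc 1 M, Tendsto (fun n ↦ w n i - w n (i + 1)) atTop (𝓝 0)) {i : ℕ}
    (hi : i ∈ Finset.Icc 1 M) : Tendsto (fun n ↦ x n - w n i) atTop (𝓝 0) := by
  obtain ⟨hi1, hiM⟩ := Finset.mem_Icc.1 hi
  clear hi
  induction i, hi1 using Nat.le_induction with
  | base =>
    refine tendsto_const_nhds.congr' ?_
    filter_upwards [eventually_ge_atTop 1] with n hn
    rw [hcycle.input n hn, sub_self]
  | succ j hj1 ih =>
    simpa using (ih (by lia)).add (hstep j (Finset.mem_Icc.2 ⟨hj1, by lia⟩))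

end IsInertialProxCycle

theorem alg1_zy_and_xw_tendsto_zero_general {H : Type*} [NormedAddCommGroup H]
    [InnerProductSpace ℝ H] {M : ℕ} {θ lam β α : ℕ → ℝ} (hs : StepSizes θ lam β α)
    {f : ℕ → H → ℝ} (hf : ∀ i ∈ Finset.Icc 1 M, ConvexOn ℝ Set.univ (f i))
    {g : ℕ → H → H} {κ : ℕ → ℝ} (hκ : ∀ i ∈ Finset.Icc 1 M, 0 < κ i)
    (hg : ∀ i ∈ Finset.Icc 1 M, Cocoercive (κ i) (g i))
    {T : ℕ → H → H} (hT : ∀ i ∈ Finset.Icc 1 M, Cocoercive 1 (T i))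
    (hS : (⋂ i ∈ Finset.Icc 1 M, Function.fixedPoints (T i)).Nonempty)
    {u x : ℕ → H} {w z d y : ℕ → ℕ → H}
    (hcycle : IsInertialProxCycle M θ lam β α f g T u x w z d y)
    (hy : ∀ i ∈ Finset.Icc 1 M, (y · i) =O[atTop] fun _ ↦ (1 : ℝ)) :
    ∀ i ∈ Finset.Icc 1 M, Tendsto (fun n ↦ ‖z n i - y n i‖) atTop (𝓝 0) ∧
      Tendsto (fun n ↦ ‖x n - w n i‖) atTop (𝓝 0) := by
  obtain ⟨p, hp⟩ := hS
  have hfix := fun i hi ↦ Set.mem_iInter₂.1 hp i hi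
  have hres := fun i hi ↦ hcycle.tendsto_residual_sq hs hf hκ hg hT hfix hy (i := i) hi
  have hzy : ∀ i ∈ Finset.Icc 1 M, Tendsto (fun n ↦ z n i - y n i) atTop (𝓝 0) := fun i hi ↦
    tendsto_zero_of_tendsto_norm_sq_add (hres i hi)
  have hyT : ∀ i ∈ Finset.Icc 1 M, Tendsto (fun n ↦ y n i - T i (y n i)) atTop (𝓝 0) := fun i hi ↦
    tendsto_zero_of_tendsto_norm_sq_add ((hres i hi).congr fun _ ↦ add_comm _ _)
  have hstep : ∀ i ∈ Finset.Icc 1 M, Tendsto (fun n ↦ w n i - w n (i + 1)) atTop (𝓝 0) :=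
    fun i hi ↦ (hcycle.stage i hi).tendsto_input_sub_output hs (hT i hi)
      (hcycle.isBigO_one_w hs hT hy hi) (hy i hi) (hzy i hi) (hyT i hi)
  exact fun i hi ↦ ⟨tendsto_zero_iff_norm_tendsto_zero.1 (hzy i hi),
    tendsto_zero_iff_norm_tendsto_zero.1 (hcycle.tendsto_x_sub_w hstep hi)⟩

theorem alg1_zy_and_xw_tendsto_zero
    {H : Type*} [NormedAddCommGroup H] [InnerProductSpace ℝ H] [CompleteSpace H]
    (M : ℕ) (hM : 1 ≤ M)
    (f h : ℕ → H → ℝ) (h' : ℕ → H → H) (L : ℕ → ℝ) (T : ℕ → H → H)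
    (hf_cont : ∀ i ∈ Finset.Icc 1 M, Continuous (f i))
    (hf_conv : ∀ i ∈ Finset.Icc 1 M, ConvexOn ℝ Set.univ (f i))
    (hh_conv : ∀ i ∈ Finset.Icc 1 M, ConvexOn ℝ Set.univ (h i))
    (hh_grad : ∀ i ∈ Finset.Icc 1 M, ∀ x : H, HasGradientAt (h i) (h' i x) x)
    (hL_pos : ∀ i ∈ Finset.Icc 1 M, 0 < L i)
    (hh_lip : ∀ i ∈ Finset.Icc 1 M, ∀ x y : H, ‖h' i x - h' i y‖ ≤ (1 / L i) * ‖x - y‖)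
    (hT_firm : ∀ i ∈ Finset.Icc 1 M, ∀ x y : H,
      ‖T i x - T i y‖ ^ 2 ≤ @inner ℝ H _ (T i x - T i y) (x - y))
    (S : Set H) (hS : S = ⋂ i ∈ Finset.Icc 1 M, {x : H | T i x = x}) (hS_ne : S.Nonempty)
    (θ lam β α : ℕ → ℝ) (σ : ℝ) (hσ : 1 ≤ σ)
    (hθ_range : ∀ n, 0 ≤ θ n ∧ θ n < 1)
    (hlam_pos : ∀ n, 0 < lam n)
    (hlam_le : ∀ n, ∀ i ∈ Finset.Icc 1 M, lam n ≤ 2 * L i)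
    (hβ_range : ∀ n, 0 < β n ∧ β n ≤ 1)
    (hα_range : ∀ n, 0 < α n ∧ α n ≤ 1)
    (hθ_anti : Antitone θ) (hlam_anti : Antitone lam)
    (hβ_anti : Antitone β) (hα_anti : Antitone α)
    (hθ_lim : Tendsto θ atTop (𝓝 0)) (hlam_lim : Tendsto lam atTop (𝓝 0))
    (hβ_lim : Tendsto β atTop (𝓝 0)) (hα_lim : Tendsto α atTop (𝓝 0))
    (hC1 : ¬ Summable α)
    (hC2 : Tendsto (fun n => (1 / α (n+1)) * |1 / lam (n+1) - 1 / lam n|) atTop (𝓝 0))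
    (hC3 : Tendsto (fun n => (1 / lam (n+1)) * |1 - α n / α (n+1)|) atTop (𝓝 0))
    (hC4 : Tendsto (fun n => α n / lam n) atTop (𝓝 0))
    (hC5 : Tendsto (fun n => θ n / (α (n+1) * lam (n+1))) atTop (𝓝 0))
    (hC6 : ∀ n, lam n / lam (n+1) ≤ σ)
    (hC7 : Tendsto (fun n => β n / α (n+1)) atTop (𝓝 0))
    (x : ℕ → H) (w z y d : ℕ → ℕ → H) (u : ℕ → H)
    (hd1 : ∀ i ∈ Finset.Icc 1 M, d 1 i = -(h' i (z 0 i)))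
    (hw1 : ∀ n ≥ 1, w n 1 = x n)
    (hz : ∀ n ≥ 1, ∀ i ∈ Finset.Icc 1 M, z n i = w n i + θ n • (w n i - w (n-1) i))
    (hd : ∀ n ≥ 1, ∀ i ∈ Finset.Icc 1 M, d (n+1) i = -(h' i (z n i)) + β n • d n i)
    (hy : ∀ n ≥ 1, ∀ i ∈ Finset.Icc 1 M, ∀ v : H,
      f i (y n i) + (1 / (2 * lam n)) * ‖z n i + lam n • d (n+1) i - y n i‖ ^ 2
        ≤ f i v + (1 / (2 * lam n)) * ‖z n i + lam n • d (n+1) i - v‖ ^ 2)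
    (hw : ∀ n ≥ 1, ∀ i ∈ Finset.Icc 1 M,
      w n (i+1) = α n • u i + (1 - α n) • T i (y n i))
    (hx : ∀ n ≥ 1, x (n+1) = w n (M+1))
    (hy_bdd : ∀ i ∈ Finset.Icc 1 M, ∃ C, ∀ n ≥ 1, ‖y n i‖ ≤ C)
    : ∀ i ∈ Finset.Icc 1 M,
      Tendsto (fun n => ‖z n i - y n i‖) atTop (𝓝 0) ∧
      Tendsto (fun n => ‖x n - w n i‖) atTop (𝓝 0) := by
  subst hS
  have hs : StepSizes θ lam β α := .of_tendsto hlam_pos (fun n ↦ (hα_range n).1)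
    (fun n ↦ (hα_range n).2) hlam_lim hα_lim hC1 hC2 hC3 hC5 hC7
  have hg : ∀ i ∈ Finset.Icc 1 M, Cocoercive (L i) (h' i) := fun i hi ↦
    cocoercive_of_hasGradientAt (hh_conv i hi) (hh_grad i hi) (hL_pos i hi) (hh_lip i hi)
  have hT : ∀ i ∈ Finset.Icc 1 M, Cocoercive 1 (T i) := fun i hi x y ↦ by
    simpa using hT_firm i hi x y
  have hcycle : IsInertialProxCycle M θ lam β α f h' T u x w z d y :=
    ⟨hw1, fun i hi ↦ ⟨fun n hn ↦ hz n hn i hi, fun n hn ↦ hd n hn i hi,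
      fun n hn ↦ hy n hn i hi, fun n hn ↦ hw n hn i hi⟩, hx⟩
  refine alg1_zy_and_xw_tendsto_zero_general hs hf_conv hL_pos hg hT hS_ne hcycle fun i hi ↦ ?_
  obtain ⟨C, hC⟩ := hy_bdd i hi
  exact .of_bound C (eventually_atTop.2 ⟨1, by simpa using hC⟩)
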